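/- Let A ∈ ℝ^{n×n} and D ∈ ℝ^{d×d} be symmetric matrices and B ∈ ℝ^{n×d}. If the smallest eigenvalue of A is at least ‖B‖₂ and the smallest eigenvalue of D is at least ‖B‖₂, then the symmetric block matrix M = [[A, B], [Bᵀ, D]] is positive semidefinite. -/

import Mathlib

open Matrix BigOperators

/-- Euclidean norm of a vector. -/
noncomputable def vnorm {k : ℕ} (v : Fin k → ℝ) : ℝ := Real.sqrt (v ⬝ᵥ v)

/-- Spectral norm of a matrix: the largest singular value, i.e. the supremum of ‖Ax‖
over unit vectors x. -/
noncomputable def spNorm {n d : ℕ} (A : Matrix (Fin n) (Fin d) ℝ) : ℝ :=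
  sSup {c | ∃ x : Fin d → ℝ, vnorm x = 1 ∧ c = vnorm (A *ᵥ x)}



theorem vnorm_eq_norm {k : ℕ} (v : Fin k → ℝ) : vnorm v = ‖WithLp.toLp 2 v‖ := by
  rw [EuclideanSpace.norm_eq, vnorm]
  congr 1
  simp [dotProduct, sq]

theorem vnorm_nonneg {k : ℕ} (v : Fin k → ℝ) : 0 ≤ vnorm v := Real.sqrt_nonneg _

theorem vnorm_sq {k : ℕ} (v : Fin k → ℝ) : vnorm v ^ 2 = v ⬝ᵥ v :=
  Real.sq_sqrt (Finset.sum_nonneg fun i _ => mul_self_nonneg (v i))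

theorem vnorm_smul {k : ℕ} (c : ℝ) (v : Fin k → ℝ) : vnorm (c • v) = |c| * vnorm v := by
  rw [vnorm_eq_norm, vnorm_eq_norm, WithLp.toLp_smul, norm_smul, Real.norm_eq_abs]

theorem spNorm_nonneg {n d : ℕ} (B : Matrix (Fin n) (Fin d) ℝ) : 0 ≤ spNorm B := by
  apply Real.sSup_nonneg
  rintro c ⟨x, _, rfl⟩
  exact vnorm_nonneg _

theorem spNorm_bddAbove {n d : ℕ} (B : Matrix (Fin n) (Fin d) ℝ) :
    BddAbove {c | ∃ x : Fin d → ℝ, vnorm x = 1 ∧ c = vnorm (B *ᵥ x)} := by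
  refine ⟨‖(Matrix.toEuclideanLin B).toContinuousLinearMap‖, ?_⟩
  rintro c ⟨x, hx, rfl⟩
  have h := (Matrix.toEuclideanLin B).toContinuousLinearMap.le_opNorm (WithLp.toLp 2 x)
  rw [← vnorm_eq_norm x, hx, mul_one] at h
  rw [vnorm_eq_norm]
  exact h

theorem vnorm_mulVec_le {n d : ℕ} (B : Matrix (Fin n) (Fin d) ℝ) (y : Fin d → ℝ) :
    vnorm (B *ᵥ y) ≤ spNorm B * vnorm y := by
  rcases (vnorm_nonneg y).eq_or_lt with h0 | h0
  · have hy : y = 0 := by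
      have h1 := vnorm_sq y
      rw [← h0] at h1
      exact dotProduct_self_eq_zero.1 (by linarith)
    subst hy
    simp [vnorm]
  · have h : vnorm (B *ᵥ ((vnorm y)⁻¹ • y)) ≤ spNorm B := by
      refine le_csSup (spNorm_bddAbove B) ⟨_, ?_, rfl⟩
      rw [vnorm_smul, abs_of_pos (inv_pos.2 h0), inv_mul_cancel₀ h0.ne']
    rw [mulVec_smul, vnorm_smul, abs_of_pos (inv_pos.2 h0), inv_mul_le_iff₀ h0] at h
    linarith

theorem abs_dotProduct_le_vnorm {k : ℕ} (v w : Fin k → ℝ) : |v ⬝ᵥ w| ≤ vnorm v * vnorm w := by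
  refine abs_le_of_sq_le_sq ?_ (mul_nonneg (vnorm_nonneg _) (vnorm_nonneg _))
  rw [mul_pow, vnorm_sq, vnorm_sq]
  have := Finset.sum_mul_sq_le_sq_mul_sq Finset.univ v w
  simpa [dotProduct, sq] using this

theorem quad_ge {k : ℕ} (A : Matrix (Fin k) (Fin k) ℝ) (s : ℝ)
    (h : (A - s • (1 : Matrix (Fin k) (Fin k) ℝ)).PosSemidef) (x : Fin k → ℝ) :
    s * vnorm x ^ 2 ≤ x ⬝ᵥ (A *ᵥ x) := by
  have := h.dotProduct_mulVec_nonneg x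
  rw [sub_mulVec, smul_mulVec, one_mulVec, dotProduct_sub, dotProduct_smul, star_trivial,
    smul_eq_mul, ← vnorm_sq] at this
  linarith

/-- Block diagonal dominance (Feingold–Varga) sufficient condition: if the smallest
eigenvalues of the symmetric diagonal blocks A and D are both at least ‖B‖₂
(i.e. A − ‖B‖₂I ⪰ 0 and D − ‖B‖₂I ⪰ 0), then [[A, B], [Bᵀ, D]] ⪰ 0. -/
theorem block_diag_dominance_posSemidef
    {n d : ℕ} (A : Matrix (Fin n) (Fin n) ℝ) (D : Matrix (Fin d) (Fin d) ℝ)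
    (B : Matrix (Fin n) (Fin d) ℝ) (hA : A.IsSymm) (hD : D.IsSymm)
    (hA2 : (A - spNorm B • (1 : Matrix (Fin n) (Fin n) ℝ)).PosSemidef)
    (hD2 : (D - spNorm B • (1 : Matrix (Fin d) (Fin d) ℝ)).PosSemidef) :
    (Matrix.fromBlocks A B Bᵀ D).PosSemidef := by
  refine Matrix.PosSemidef.of_dotProduct_mulVec_nonneg ?_ ?_
  · exact Matrix.IsHermitian.fromBlocks (by simpa [IsHermitian] using hA.eq)
      (by simp) (by simpa [IsHermitian] using hD.eq)
  · intro z
    obtain ⟨x, y, rfl⟩ : ∃ x y, z = Sum.elim x y := ⟨z ∘ Sum.inl, z ∘ Sum.inr, by simp⟩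
    have h1 := quad_ge A _ hA2 x
    have h2 := quad_ge D _ hD2 y
    have h3 := (abs_le.1 (abs_dotProduct_le_vnorm x (B *ᵥ y))).1
    have h4 := mul_le_mul_of_nonneg_left (vnorm_mulVec_le B y) (vnorm_nonneg x)
    have h5 := mul_nonneg (spNorm_nonneg B) (sq_nonneg (vnorm x - vnorm y))
    have h6 : y ⬝ᵥ (Bᵀ *ᵥ x) = x ⬝ᵥ (B *ᵥ y) := by
      rw [mulVec_transpose, dotProduct_comm, dotProduct_mulVec]
    rw [star_trivial, fromBlocks_mulVec, Sum.elim_comp_inl, Sum.elim_comp_inr,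
      sumElim_dotProduct_sumElim, dotProduct_add, dotProduct_add, h6]
    nlinarith
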